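/- There exist unique ℚ-algebra homomorphisms Z̄^{*̄} : (H^1, *̄) → ℝ[T] and Z̄^{ш̄} : (H^1, ш̄) → ℝ[T] that both extend the n-evaluation map Z̄ : H^0 → ℝ and send y to T. -/

import Mathlib

open scoped BigOperators

/-- The two-letter alphabet {x, y}. -/
inductive Letter : Type
  | x : Letter
  | y : Letter
deriving DecidableEq

/-- `H = ℚ⟨x,y⟩`, the noncommutative polynomial ring over ℚ in two
indeterminates, realized as the monoid algebra of the free monoid on `{x,y}`. -/
abbrev H : Type := MonoidAlgebra ℚ (FreeMonoid Letter)

namespace H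

/-- The monomial (word) of `H` corresponding to an element of the free monoid. -/
noncomputable def word (w : FreeMonoid Letter) : H := MonoidAlgebra.single w 1

/-- The generator `x`. -/
noncomputable def X : H := word (FreeMonoid.of Letter.x)

/-- The generator `y`. -/
noncomputable def Y : H := word (FreeMonoid.of Letter.y)

/-- The word `z_k = x^{k-1} y` (for `k ≥ 1`). -/
def zW (k : ℕ) : FreeMonoid Letter :=
  FreeMonoid.ofList (List.replicate (k - 1) Letter.x ++ [Letter.y])

/-- `z_k = x^{k-1} y` as an element of `H`. -/
noncomputable def z (k : ℕ) : H := word (zW k)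

/-- A list `[k₁,…,kₙ]` gives the word `z_{k₁} z_{k₂} ⋯ z_{kₙ}`. -/
def zListW (ks : List ℕ) : FreeMonoid Letter :=
  FreeMonoid.ofList (ks.flatMap fun k => List.replicate (k - 1) Letter.x ++ [Letter.y])

/-- `H¹ = ℚ + Hy` as a ℚ-submodule of `H`. -/
noncomputable def H1 : Submodule ℚ H :=
  LinearMap.range (LinearMap.mulRight ℚ Y) ⊔ Submodule.span ℚ {1}

/-- `H⁰ = ℚ + xHy` as a ℚ-submodule of `H`. -/
noncomputable def H0 : Submodule ℚ H :=
  LinearMap.range ((LinearMap.mulRight ℚ Y).comp (LinearMap.mulLeft ℚ X)) ⊔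
    Submodule.span ℚ {1}

/-- Parse a word of `H¹` into the exponent list of its `z`-decomposition:
`z_{k₁}⋯z_{kₙ} ↦ [k₁,…,kₙ]` (auxiliary accumulator version). -/
def toZAux : List Letter → ℕ → List ℕ
  | [], _ => []
  | Letter.x :: r, n => toZAux r (n + 1)
  | Letter.y :: r, n => (n + 1) :: toZAux r 0

/-- The `z`-decomposition of a word of `H¹`. -/
def toZ (w : FreeMonoid Letter) : List ℕ := toZAux (FreeMonoid.toList w) 0

/-- The harmonic product on words of `H¹` (via `z`-decompositions):
`1 * w = w * 1 = w` and
`z_k w₁ * z_l w₂ = z_k (w₁ * z_l w₂) + z_l (z_k w₁ * w₂) + z_{k+l} (w₁ * w₂)`. -/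
noncomputable def harmW : List ℕ → List ℕ → H
  | [], w => word (zListW w)
  | k :: w1, [] => word (zListW (k :: w1))
  | k :: w1, l :: w2 =>
      z k * harmW w1 (l :: w2) + z l * harmW (k :: w1) w2 + z (k + l) * harmW w1 w2
termination_by w1 w2 => w1.length + w2.length
decreasing_by all_goals simp [Nat.lt_succ_iff] <;> omega

/-- The n-harmonic product on words of `H¹`:
`1 *̄ w = w *̄ 1 = w` and
`z_k w₁ *̄ z_l w₂ = z_k (w₁ *̄ z_l w₂) + z_l (z_k w₁ *̄ w₂) − z_{k+l} (w₁ *̄ w₂)`. -/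
noncomputable def nharmW : List ℕ → List ℕ → H
  | [], w => word (zListW w)
  | k :: w1, [] => word (zListW (k :: w1))
  | k :: w1, l :: w2 =>
      z k * nharmW w1 (l :: w2) + z l * nharmW (k :: w1) w2 - z (k + l) * nharmW w1 w2
termination_by w1 w2 => w1.length + w2.length
decreasing_by all_goals simp [Nat.lt_succ_iff] <;> omega

/-- The harmonic product `*` on `H¹`, extended ℚ-bilinearly. -/
noncomputable def harm (a b : H) : H :=
  Finsupp.sum a.coeff fun w1 c1 =>
    Finsupp.sum b.coeff fun w2 c2 => (c1 * c2) • harmW (toZ w1) (toZ w2)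

/-- The n-harmonic product `*̄` on `H¹`, extended ℚ-bilinearly. -/
noncomputable def nharm (a b : H) : H :=
  Finsupp.sum a.coeff fun w1 c1 =>
    Finsupp.sum b.coeff fun w2 c2 => (c1 * c2) • nharmW (toZ w1) (toZ w2)

/-- The letter exchange `τ(x) = y`, `τ(y) = x`. -/
def τ : Letter → Letter
  | Letter.x => Letter.y
  | Letter.y => Letter.x

/-- `δ(w) = 1` if `w` is the empty word, `0` otherwise. -/
def δ : List Letter → ℚ
  | [] => 1
  | _ :: _ => 0

/-- The shuffle product on words:
`1 ш w = w ш 1 = w` and `u₁w₁ ш u₂w₂ = u₁(w₁ ш u₂w₂) + u₂(u₁w₁ ш w₂)`. -/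
noncomputable def shW : List Letter → List Letter → H
  | [], w => word (FreeMonoid.ofList w)
  | u :: w, [] => word (FreeMonoid.ofList (u :: w))
  | u1 :: w1, u2 :: w2 =>
      word (FreeMonoid.of u1) * shW w1 (u2 :: w2) +
        word (FreeMonoid.of u2) * shW (u1 :: w1) w2
termination_by w1 w2 => w1.length + w2.length
decreasing_by all_goals simp [Nat.lt_succ_iff]

/-- The n-shuffle product on words: `1 ш̄ w = w ш̄ 1 = w` and
`u₁w₁ ш̄ u₂w₂ = u₁(w₁ ш̄ u₂w₂) + u₂(u₁w₁ ш̄ w₂) − δ(w₁)τ(u₁)u₂w₂ − δ(w₂)τ(u₂)u₁w₁`. -/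
noncomputable def nshW : List Letter → List Letter → H
  | [], w => word (FreeMonoid.ofList w)
  | u :: w, [] => word (FreeMonoid.ofList (u :: w))
  | u1 :: w1, u2 :: w2 =>
      word (FreeMonoid.of u1) * nshW w1 (u2 :: w2) +
        word (FreeMonoid.of u2) * nshW (u1 :: w1) w2 -
        δ w1 • word (FreeMonoid.ofList (τ u1 :: u2 :: w2)) -
        δ w2 • word (FreeMonoid.ofList (τ u2 :: u1 :: w1))
termination_by w1 w2 => w1.length + w2.length
decreasing_by all_goals simp [Nat.lt_succ_iff]

/-- The shuffle product `ш` on `H`, extended ℚ-bilinearly. -/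
noncomputable def sh (a b : H) : H :=
  Finsupp.sum a.coeff fun w1 c1 =>
    Finsupp.sum b.coeff fun w2 c2 =>
      (c1 * c2) • shW (FreeMonoid.toList w1) (FreeMonoid.toList w2)

/-- The n-shuffle product `ш̄` on `H`, extended ℚ-bilinearly. -/
noncomputable def nsh (a b : H) : H :=
  Finsupp.sum a.coeff fun w1 c1 =>
    Finsupp.sum b.coeff fun w2 c2 =>
      (c1 * c2) • nshW (FreeMonoid.toList w1) (FreeMonoid.toList w2)

/-- `S₁`: the ℚ-algebra endomorphism of `H` with `S₁(x) = x`, `S₁(y) = x + y`. -/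
noncomputable def S1 : H →ₐ[ℚ] H :=
  MonoidAlgebra.lift ℚ H (FreeMonoid Letter)
    (FreeMonoid.lift fun u => match u with
      | Letter.x => X
      | Letter.y => X + Y)

/-- `S₂`: the ℚ-algebra endomorphism of `H` with `S₂(x) = x`, `S₂(y) = y − x`. -/
noncomputable def S2 : H →ₐ[ℚ] H :=
  MonoidAlgebra.lift ℚ H (FreeMonoid Letter)
    (FreeMonoid.lift fun u => match u with
      | Letter.x => X
      | Letter.y => Y - X)

/-- `S` on a word: `S(1) = 1` and `S(Fy) = S₁(F)y`. -/
noncomputable def SW (w : FreeMonoid Letter) : H :=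
  match (FreeMonoid.toList w).getLast? with
  | some Letter.y =>
      S1 (word (FreeMonoid.ofList (FreeMonoid.toList w).dropLast)) * Y
  | _ => word w

/-- The ℚ-linear map `S : H¹ → H¹` with `S(1) = 1`, `S(Fy) = S₁(F)y`. -/
noncomputable def S (a : H) : H := Finsupp.sum a.coeff fun w c => c • SW w

/-- `S̃` on a word: `S̃(1) = 1` and `S̃(Fy) = S₂(F)y`. -/
noncomputable def StW (w : FreeMonoid Letter) : H :=
  match (FreeMonoid.toList w).getLast? with
  | some Letter.y =>
      S2 (word (FreeMonoid.ofList (FreeMonoid.toList w).dropLast)) * Y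
  | _ => word w

/-- The ℚ-linear map `S̃ : H¹ → H¹` with `S̃(1) = 1`, `S̃(Fy) = S₂(F)y`. -/
noncomputable def St (a : H) : H := Finsupp.sum a.coeff fun w c => c • StW w

/-- The multiple zeta value `ζ(k₁,…,kₙ)`: the sum over strictly decreasing
tuples `m₁ > m₂ > ⋯ > mₙ > 0` of `1/(m₁^{k₁}⋯mₙ^{kₙ})`. -/
noncomputable def mzeta (ks : List ℕ) : ℝ :=
  ∑' m : {f : Fin ks.length → ℕ // (∀ i, 0 < f i) ∧
      ∀ i j : Fin ks.length, i < j → f j < f i},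
    ∏ i : Fin ks.length, ((m.1 i : ℝ) ^ ks.get i)⁻¹

/-- The non-strict multiple zeta value `ζ̄(k₁,…,kₙ)`: the sum over weakly
decreasing tuples `m₁ ≥ m₂ ≥ ⋯ ≥ mₙ > 0` of `1/(m₁^{k₁}⋯mₙ^{kₙ})`. -/
noncomputable def nmzeta (ks : List ℕ) : ℝ :=
  ∑' m : {f : Fin ks.length → ℕ // (∀ i, 0 < f i) ∧
      ∀ i j : Fin ks.length, i ≤ j → f j ≤ f i},
    ∏ i : Fin ks.length, ((m.1 i : ℝ) ^ ks.get i)⁻¹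

/-- The evaluation map `Z : H⁰ → ℝ`, `Z(1) = 1`,
`Z(z_{k₁}⋯z_{kₙ}) = ζ(k₁,…,kₙ)` (extended ℚ-linearly to `H`). -/
noncomputable def Z (a : H) : ℝ := Finsupp.sum a.coeff fun w c => (c : ℝ) * mzeta (toZ w)

/-- The n-evaluation map `Z̄ : H⁰ → ℝ`, `Z̄(1) = 1`,
`Z̄(z_{k₁}⋯z_{kₙ}) = ζ̄(k₁,…,kₙ)` (extended ℚ-linearly to `H`). -/
noncomputable def Zbar (a : H) : ℝ := Finsupp.sum a.coeff fun w c => (c : ℝ) * nmzeta (toZ w)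

/-- `i`-fold n-harmonic power: `a^{*̄ 0} = 1`, `a^{*̄ (i+1)} = a *̄ a^{*̄ i}`. -/
noncomputable def nharmPow : ℕ → H → H
  | 0, _ => 1
  | i + 1, a => nharm a (nharmPow i a)

/-- `i`-fold n-shuffle power: `a^{ш̄ 0} = 1`, `a^{ш̄ (i+1)} = a ш̄ a^{ш̄ i}`. -/
noncomputable def nshPow : ℕ → H → H
  | 0, _ => 1
  | i + 1, a => nsh a (nshPow i a)

end H

open H

/-- `IsRegHom mul ev f` says the ℚ-linear map `f : H → ℝ[T]` is a ℚ-algebra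
homomorphism from `(H¹, mul)` to `ℝ[T]` which extends the evaluation map
`ev` on `H⁰` and sends `y` to `T`. -/
def IsRegHom (mul : H → H → H) (ev : H → ℝ) (f : H →ₗ[ℚ] Polynomial ℝ) : Prop :=
  (∀ a ∈ H1, ∀ b ∈ H1, f (mul a b) = f a * f b) ∧
  (∀ a ∈ H0, f a = Polynomial.C (ev a)) ∧
  f Y = Polynomial.X

section
open H
open Filter Topology

namespace RegHom

noncomputable def wl (l : List Letter) : H := word (FreeMonoid.ofList l)

lemma wl_mul (a b : List Letter) : wl a * wl b = wl (a ++ b) := by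
  simp [wl, word, MonoidAlgebra.single_mul_single]

lemma wl_nil : wl [] = 1 := rfl
lemma X_eq : X = wl [Letter.x] := rfl
lemma Y_eq : Y = wl [Letter.y] := rfl

/-- Linear extension of a function on words. -/
noncomputable def lin {M : Type*} [AddCommGroup M] [Module ℚ M] (φ : List Letter → M) :
    H →ₗ[ℚ] M :=
  (Finsupp.linearCombination ℚ (fun w : FreeMonoid Letter => φ w.toList)).comp
    (MonoidAlgebra.coeffLinearEquiv ℚ).toLinearMap

lemma lin_apply {M : Type*} [AddCommGroup M] [Module ℚ M] (φ : List Letter → M) (a : H) :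
    lin φ a = Finsupp.sum a.coeff fun w c => c • φ w.toList := rfl

@[simp] lemma lin_wl {M : Type*} [AddCommGroup M] [Module ℚ M] (φ : List Letter → M)
    (l : List Letter) : lin φ (wl l) = φ l := by
  rw [lin_apply]
  simp [wl, word]

lemma span_wl (a : H) : a ∈ Submodule.span ℚ (Set.range wl) := by
  induction a using MonoidAlgebra.induction_linear with
  | zero => exact Submodule.zero_mem _
  | add a b ha hb => exact Submodule.add_mem _ ha hb
  | single m r =>
    have : MonoidAlgebra.single m r = r • wl m.toList := by
      simp [wl, word]
    rw [this]
    exact Submodule.smul_mem _ _ (Submodule.subset_span ⟨_, rfl⟩)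

lemma lin_ext {M : Type*} [AddCommGroup M] [Module ℚ M] {f g : H →ₗ[ℚ] M}
    (h : ∀ l, f (wl l) = g (wl l)) (a : H) : f a = g a := by
  have := span_wl a
  induction this using Submodule.span_induction with
  | mem x hx => obtain ⟨l, rfl⟩ := hx; exact h l
  | zero => simp
  | add x y _ _ hx hy => simp [hx, hy]
  | smul c x _ hx => simp [hx]

/-- words ending in y -/
inductive G : List Letter → Prop
  | base : G [Letter.y]
  | cons (u : Letter) {w : List Letter} : G w → G (u :: w)

lemma G_append (l : List Letter) : G (l ++ [Letter.y]) := by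
  induction l with
  | nil => exact G.base
  | cons u l ih => exact G.cons u ih

lemma G_exists {l : List Letter} (h : G l) : ∃ l', l = l' ++ [Letter.y] := by
  induction h with
  | base => exact ⟨[], rfl⟩
  | cons u _ ih => obtain ⟨tail, rfl⟩ := ih; exact ⟨u :: tail, rfl⟩

/-- `Hy` -/
noncomputable def Hy : Submodule ℚ H := Submodule.span ℚ {a | ∃ l, G l ∧ a = wl l}

lemma wl_mem_Hy {l : List Letter} (h : G l) : wl l ∈ Hy := Submodule.subset_span ⟨l, h, rfl⟩

lemma Hy_eq : Hy = LinearMap.range (LinearMap.mulRight ℚ Y) := by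
  apply le_antisymm
  · refine Submodule.span_le.2 ?_
    rintro _ ⟨l, hl, rfl⟩
    obtain ⟨l', rfl⟩ := G_exists hl
    exact ⟨wl l', by simp [Y_eq, wl_mul]⟩
  · rintro _ ⟨a, rfl⟩
    have := span_wl a
    induction this using Submodule.span_induction with
    | mem x hx => obtain ⟨l, rfl⟩ := hx; simp only [LinearMap.mulRight_apply, Y_eq, wl_mul]
                  exact wl_mem_Hy (G_append l)
    | zero => simp
    | add x y _ _ hx hy => rw [map_add]; exact Submodule.add_mem _ hx hy
    | smul c x _ hx => rw [map_smul]; exact Submodule.smul_mem _ _ hx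

lemma Hy_le : Hy ≤ H1 := by rw [Hy_eq]; exact le_sup_left
lemma one_mem_H1 : (1 : H) ∈ H1 := Submodule.mem_sup_right (Submodule.mem_span_singleton_self _)
lemma one_mem_H0 : (1 : H) ∈ H0 := Submodule.mem_sup_right (Submodule.mem_span_singleton_self _)
lemma Y_mem_Hy : Y ∈ Hy := wl_mem_Hy G.base
lemma Y_mem_H1 : Y ∈ H1 := Hy_le Y_mem_Hy

lemma wl_mem_H1 {l : List Letter} (h : l = [] ∨ G l) : wl l ∈ H1 := by
  rcases h with rfl | h
  · exact one_mem_H1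
  · exact Hy_le (wl_mem_Hy h)

lemma mul_Hy (l : List Letter) {a : H} (h : a ∈ Hy) : wl l * a ∈ Hy := by
  rw [Hy_eq] at *
  obtain ⟨b, rfl⟩ := h
  exact ⟨wl l * b, by simp [mul_assoc]⟩

lemma x_mul_Hy {a : H} (h : a ∈ Hy) : wl [Letter.x] * a ∈ H0 := by
  rw [Hy_eq] at h
  obtain ⟨b, rfl⟩ := h
  exact Submodule.mem_sup_left ⟨b, by simp [mul_assoc, X_eq]⟩

lemma y_mul_H1 {a : H} (h : a ∈ H1) : wl [Letter.y] * a ∈ Hy := by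
  obtain ⟨b, hb, c, hc, rfl⟩ := Submodule.mem_sup.1 h
  obtain ⟨q, rfl⟩ := Submodule.mem_span_singleton.1 hc
  rw [← Hy_eq] at hb
  rw [mul_add]
  refine Submodule.add_mem _ (mul_Hy _ hb) ?_
  simpa using Submodule.smul_mem _ q (wl_mem_Hy G.base)

lemma H1_le {V : Submodule ℚ H} (h : ∀ l, l = [] ∨ G l → wl l ∈ V) : H1 ≤ V := by
  refine sup_le ?_ ?_
  · rw [← Hy_eq]
    refine Submodule.span_le.2 ?_
    rintro _ ⟨l, hl, rfl⟩
    exact h l (Or.inr hl)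
  · refine Submodule.span_le.2 ?_
    rintro _ rfl
    exact h [] (Or.inl rfl)

lemma H0_le {V : Submodule ℚ H} (h1 : 1 ∈ V) (h : ∀ l, G l → wl (Letter.x :: l) ∈ V) : H0 ≤ V := by
  refine sup_le ?_ ?_
  · rintro _ ⟨a, rfl⟩
    have := span_wl a
    induction this using Submodule.span_induction with
    | mem x hx => obtain ⟨l, rfl⟩ := hx
                  have := h _ (G_append l)
                  simpa [X_eq, Y_eq, wl_mul] using this
    | zero => simp
    | add x y _ _ hx hy => rw [map_add]; exact Submodule.add_mem _ hx hy
    | smul c x _ hx => rw [map_smul]; exact Submodule.smul_mem _ _ hx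
  · refine Submodule.span_le.2 ?_
    rintro _ rfl
    exact h1

lemma H0_le_H1 : H0 ≤ H1 := H0_le one_mem_H1 fun _ h => wl_mem_H1 (Or.inr (G.cons _ h))

noncomputable def Vn : ℕ → Submodule ℚ H
  | 0 => H0
  | n + 1 => H0 ⊔ (Vn n).map (LinearMap.mulLeft ℚ Y)

lemma H0_le_Vn (n : ℕ) : H0 ≤ Vn n := by
  cases n with
  | zero => exact le_rfl
  | succ n => exact le_sup_left

lemma Y_mul_Vn {n : ℕ} {v : H} (h : v ∈ Vn n) : Y * v ∈ Vn (n + 1) :=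
  Submodule.mem_sup_right ⟨v, h, rfl⟩

lemma Vn_le_H1 (n : ℕ) : Vn n ≤ H1 := by
  induction n with
  | zero => exact H0_le_H1
  | succ n ih =>
    refine sup_le H0_le_H1 ?_
    rintro _ ⟨v, hv, rfl⟩
    exact Hy_le (y_mul_H1 (ih hv))

lemma Vn_mono (n : ℕ) : Vn n ≤ Vn (n + 1) := by
  induction n with
  | zero => exact le_sup_left
  | succ n ih => exact sup_le_sup le_rfl (Submodule.map_mono ih)

lemma wl_mem_Vn {l : List Letter} (h : l = [] ∨ G l) : ∃ n, wl l ∈ Vn n := by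
  rcases h with rfl | h
  · exact ⟨0, one_mem_H0⟩
  · induction h with
    | base => exact ⟨1, by simpa [Y_eq, wl_nil] using Y_mul_Vn (n := 0) one_mem_H0⟩
    | @cons u w hw ih =>
      cases u with
      | x => refine ⟨0, ?_⟩
             have := x_mul_Hy (wl_mem_Hy hw)
             rwa [wl_mul] at this
      | y => obtain ⟨n, hn⟩ := ih
             refine ⟨n + 1, ?_⟩
             have := Y_mul_Vn hn
             rwa [Y_eq, wl_mul] at this

lemma generation (m : H →ₗ[ℚ] H)
    (h0 : ∀ v ∈ H0, m v - Y * v ∈ H0)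
    (h1 : ∀ v ∈ H1, m (Y * v) - Y * (Y * v) - Y * m v ∈ H0)
    (V : Submodule ℚ H) (hV0 : H0 ≤ V) (hV : ∀ v ∈ V, v ∈ H1 → m v ∈ V) : H1 ≤ V := by
  have key : ∀ n, ∀ v ∈ Vn n, m v - ((n : ℚ) + 1) • (Y * v) ∈ Vn n := by
    intro n
    induction n with
    | zero => intro v hv; simpa [Vn] using h0 v hv
    | succ n ih =>
      intro v hv
      obtain ⟨a, ha, b, hb, rfl⟩ := Submodule.mem_sup.1 hv
      obtain ⟨v, hv', rfl⟩ := hb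
      simp only [LinearMap.mulLeft_apply]
      have e1 := H0_le_Vn (n + 1) (h0 a ha)
      have e2 := H0_le_Vn (n + 1) (h1 v (Vn_le_H1 n hv'))
      have e3 := Y_mul_Vn (ih v hv')
      have e4 : ((n : ℚ) + 1) • (Y * a) ∈ Vn (n + 1) :=
        Submodule.smul_mem _ _ (Y_mul_Vn (H0_le_Vn n ha))
      have := Submodule.sub_mem _ (Submodule.add_mem _ (Submodule.add_mem _ e1 e2) e3) e4
      convert this using 1
      rw [map_add, mul_sub, mul_smul_comm, mul_add]
      push_cast
      module
  have hle : ∀ n, Vn n ≤ V := by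
    intro n
    induction n with
    | zero => exact hV0
    | succ n ih =>
      refine sup_le hV0 ?_
      rintro _ ⟨v, hv, rfl⟩
      simp only [LinearMap.mulLeft_apply]
      have e1 := hV v (ih hv) (Vn_le_H1 n hv)
      have e2 := ih (key n v hv)
      have e3 := Submodule.sub_mem _ e1 e2
      rw [sub_sub_cancel] at e3
      exact (Submodule.smul_mem_iff _ (by positivity)).1 e3
  refine H1_le fun l hl => ?_
  obtain ⟨n, hn⟩ := wl_mem_Vn hl
  exact hle n hn

end RegHom
end

section
open H
open Filter Topology
open scoped Polynomial
namespace RegHom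

/-- asymptotic expansion relation -/
def R (L φ : ℕ → ℝ) (P : ℝ[X]) : Prop :=
  ∀ J : ℕ, Tendsto (fun n => (φ n - P.eval (L n)) * L n ^ J) atTop (𝓝 0)

lemma R_poly {L φ : ℕ → ℝ} {P : ℝ[X]} (h : R L φ P) (Q : ℝ[X]) (J : ℕ) :
    Tendsto (fun n => (φ n - P.eval (L n)) * Q.eval (L n) * L n ^ J) atTop (𝓝 0) := by
  induction Q using Polynomial.induction_on' with
  | add p q hp hq =>
    have := hp.add hq
    rw [add_zero] at this
    refine this.congr fun n => ?_
    rw [Polynomial.eval_add]; ring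
  | monomial k c =>
    have := (h (k + J)).const_mul c
    rw [mul_zero] at this
    refine this.congr fun n => ?_
    rw [Polynomial.eval_monomial]; ring

lemma R_add {L φ ψ : ℕ → ℝ} {P Q : ℝ[X]} (h : R L φ P) (h' : R L ψ Q) :
    R L (φ + ψ) (P + Q) := by
  intro J
  have := (h J).add (h' J)
  rw [add_zero] at this
  refine this.congr fun n => ?_
  rw [Polynomial.eval_add, Pi.add_apply]; ring

lemma R_smul {L φ : ℕ → ℝ} {P : ℝ[X]} (c : ℚ) (h : R L φ P) :
    R L (c • φ) (c • P) := by
  intro J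
  have := (h J).const_mul (c : ℝ)
  rw [mul_zero] at this
  refine this.congr fun n => ?_
  rw [Polynomial.eval_smul, Pi.smul_apply, Rat.smul_def, Rat.smul_def]; ring

lemma R_mul {L φ ψ : ℕ → ℝ} {P Q : ℝ[X]} (h : R L φ P) (h' : R L ψ Q) :
    R L (φ * ψ) (P * Q) := by
  intro J
  have := (((h J).mul (h' 0)).add (R_poly h Q J)).add (R_poly h' P J)
  rw [mul_zero, add_zero, add_zero] at this
  refine this.congr fun n => ?_
  rw [Polynomial.eval_mul, Pi.mul_apply]; ring

lemma R_zero (L : ℕ → ℝ) : R L 0 0 := by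
  intro J; simp

lemma R_unique {L φ : ℕ → ℝ} (hL : Tendsto L atTop atTop) {P Q : ℝ[X]} (h : R L φ P)
    (h' : R L φ Q) : P = Q := by
  have h0 : Tendsto (fun n => (P - Q).eval (L n)) atTop (𝓝 0) := by
    have := (h' 0).sub (h 0)
    rw [sub_zero] at this
    refine this.congr fun n => ?_
    rw [Polynomial.eval_sub]; ring
  rw [← sub_eq_zero]
  generalize P - Q = D at h0
  by_cases hd : 0 < D.degree
  · exfalso
    have h1 := (Polynomial.abs_tendsto_atTop D hd).comp hL
    exact not_tendsto_nhds_of_tendsto_atTop h1 _ h0.abs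
  · obtain ⟨c, rfl⟩ : ∃ c, D = Polynomial.C c := ⟨_, Polynomial.eq_C_of_degree_le_zero (not_lt.1 hd)⟩
    simp only [Polynomial.eval_C] at h0
    rw [tendsto_nhds_unique tendsto_const_nhds h0, map_zero]

end RegHom
end

section
open H
open Filter Topology
open scoped Polynomial
namespace RegHom

lemma abstract_main (mul : H → H → H) (ev : H →ₗ[ℚ] (ℕ → ℝ)) (L : ℕ → ℝ)
    (hL : Tendsto L atTop atTop)
    (hmul : ∀ a ∈ H1, ∀ b ∈ H1, ev (mul a b) = ev a * ev b)
    (hy : ev Y = L)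
    (hev : ∀ a ∈ H0, R L (ev a) (Polynomial.C (Zbar a)))
    (m : H →ₗ[ℚ] H) (hm : ∀ a, mul Y a = m a)
    (h0 : ∀ v ∈ H0, m v - Y * v ∈ H0)
    (h1 : ∀ v ∈ H1, m (Y * v) - Y * (Y * v) - Y * m v ∈ H0) :
    ∃ f : H →ₗ[ℚ] Polynomial ℝ, IsRegHom mul Zbar f ∧
      ∀ g : H →ₗ[ℚ] Polynomial ℝ, IsRegHom mul Zbar g → ∀ a ∈ H1, g a = f a := by
  let W : Submodule ℚ H :=
    { carrier := {v | ∃ P, R L (ev v) P}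
      add_mem' := by
        rintro a b ⟨P, hP⟩ ⟨Q, hQ⟩
        exact ⟨P + Q, by rw [map_add]; exact R_add hP hQ⟩
      zero_mem' := ⟨0, by rw [map_zero]; exact R_zero L⟩
      smul_mem' := by
        rintro c a ⟨P, hP⟩
        exact ⟨c • P, by rw [map_smul]; exact R_smul c hP⟩ }
  have hW : ∀ v : W, ∃ P, R L (ev v) P := fun v => v.2
  choose p hp using hW
  let f0 : W →ₗ[ℚ] ℝ[X] :=
    { toFun := p
      map_add' := fun a b => R_unique hL (hp _) (by
        rw [Submodule.coe_add, map_add]; exact R_add (hp a) (hp b))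
      map_smul' := fun c a => R_unique hL (hp _) (by
        rw [Submodule.coe_smul, map_smul]; exact R_smul c (hp a)) }
  obtain ⟨f, hf⟩ := f0.exists_extend
  have hf' : ∀ v P, R L (ev v) P → f v = P := by
    intro v P h
    have : f v = p ⟨v, P, h⟩ := congrArg (fun g => g ⟨v, P, h⟩) hf
    rw [this]
    exact R_unique hL (hp _) h
  have hRY : R L (ev Y) Polynomial.X := by
    rw [hy]; intro J; simp
  have hH1 : H1 ≤ W := by
    refine generation m h0 h1 W (fun a ha => ⟨_, hev a ha⟩) ?_
    rintro v ⟨P, hP⟩ hv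
    refine ⟨Polynomial.X * P, ?_⟩
    rw [← hm, hmul _ Y_mem_H1 _ hv]
    exact R_mul hRY hP
  have hreg : IsRegHom mul Zbar f := by
    refine ⟨?_, fun a ha => hf' _ _ (hev a ha), hf' _ _ hRY⟩
    intro a ha b hb
    obtain ⟨P, hP⟩ := hH1 ha
    obtain ⟨Q, hQ⟩ := hH1 hb
    rw [hf' _ _ hP, hf' _ _ hQ]
    refine hf' _ _ ?_
    rw [hmul a ha b hb]
    exact R_mul hP hQ
  refine ⟨f, hreg, fun g hg => ?_⟩
  have : H1 ≤ LinearMap.eqLocus g f := by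
    refine generation m h0 h1 _ ?_ ?_
    · intro a ha
      show g a = f a
      rw [hg.2.1 a ha, hreg.2.1 a ha]
    · intro v hv hv1
      change g v = f v at hv
      show g (m v) = f (m v)
      rw [← hm, hg.1 _ Y_mem_H1 _ hv1, hreg.1 _ Y_mem_H1 _ hv1, hg.2.2, hreg.2.2, hv]
  exact fun a ha => this ha

end RegHom
end

section
open H
open Filter Topology
open scoped Polynomial
namespace RegHom

/-- `z`-decomposition for lists of letters. -/
def tz (l : List Letter) : List ℕ := toZAux l 0

lemma tz_nil : tz [] = [] := rfl
lemma tz_y (l : List Letter) : tz (Letter.y :: l) = 1 :: tz l := rfl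

lemma toZAux_cons_exists {l : List Letter} (h : G l) (n : ℕ) :
    ∃ k ks, toZAux l n = (n + k + 1) :: ks ∧ ∀ j, toZAux l j = (j + k + 1) :: ks := by
  induction h generalizing n with
  | base => exact ⟨0, [], rfl, fun j => rfl⟩
  | @cons u w hw ih =>
    cases u with
    | y => exact ⟨0, toZAux w 0, rfl, fun j => rfl⟩
    | x =>
      obtain ⟨k, ks, h1, h2⟩ := ih n
      refine ⟨k + 1, ks, ?_, fun j => ?_⟩
      · simp only [toZAux]; rw [h2]; congr 1; ring
      · simp only [toZAux]; rw [h2]; congr 1; ring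

/-- For a word ending in y, prefixing `x` increments the head. -/
lemma tz_x {l : List Letter} (h : G l) :
    ∃ k ks, tz l = (k + 1) :: ks ∧ tz (Letter.x :: l) = (k + 2) :: ks := by
  obtain ⟨k, ks, -, h2⟩ := toZAux_cons_exists h 0
  refine ⟨k, ks, ?_, ?_⟩
  · rw [tz, h2]; congr 1; ring
  · rw [tz]; simp only [toZAux]; rw [h2]; congr 1; ring

lemma toZAux_pos (l : List Letter) (n : ℕ) : ∀ k ∈ toZAux l n, 1 ≤ k := by
  induction l generalizing n with
  | nil => simp [toZAux]
  | cons u l ih =>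
    cases u with
    | x => exact ih _
    | y =>
      intro k hk
      simp only [toZAux, List.mem_cons] at hk
      rcases hk with rfl | hk
      · omega
      · exact ih _ _ hk

lemma tz_pos (l : List Letter) : ∀ k ∈ tz l, 1 ≤ k := toZAux_pos l 0

lemma toZAux_rep (j n : ℕ) (l : List Letter) :
    toZAux (List.replicate j Letter.x ++ Letter.y :: l) n = (n + j + 1) :: toZAux l 0 := by
  induction j generalizing n with
  | zero => rfl
  | succ j ih =>
    rw [List.replicate_succ, List.cons_append]
    simp only [toZAux]
    rw [ih]; congr 1; ring

/-- list of letters of `z_k` -/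
def zl (k : ℕ) : List Letter := List.replicate (k - 1) Letter.x ++ [Letter.y]

lemma z_eq (k : ℕ) : z k = wl (zl k) := rfl

lemma tz_zl {k : ℕ} (hk : 1 ≤ k) (l : List Letter) : tz (zl k ++ l) = k :: tz l := by
  rw [tz, zl, List.append_assoc, List.singleton_append, toZAux_rep]
  congr 1; omega

/-- list of letters of `z_{k_1}...z_{k_n}` -/
def zll (ks : List ℕ) : List Letter := ks.flatMap zl

lemma word_zListW (ks : List ℕ) : word (zListW ks) = wl (zll ks) := rfl

lemma tz_zll {ks : List ℕ} (h : ∀ k ∈ ks, 1 ≤ k) : tz (zll ks) = ks := by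
  induction ks with
  | nil => rfl
  | cons k ks ih =>
    rw [zll, List.flatMap_cons, tz_zl (h k (by simp))]
    rw [← zll, ih fun j hj => h j (by simp [hj])]

lemma zll_cons (k : ℕ) (ks : List ℕ) : zll (k :: ks) = zl k ++ zll ks := rfl

lemma zll_aux {l : List Letter} (h : l = [] ∨ G l) : zll (tz l) = l := by
  rcases h with rfl | h
  · rfl
  · induction h with
    | base => rfl
    | @cons u w hw ih =>
      cases u with
      | y => rw [tz_y, zll_cons, ih]; rfl
      | x =>
        obtain ⟨k, ks, h1, h2⟩ := tz_x hw
        rw [h1, zll_cons] at ih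
        rw [h2, zll_cons, ← ih]
        simp [zl, List.replicate_succ]

lemma good_zll (ks : List ℕ) : zll ks = [] ∨ G (zll ks) := by
  induction ks with
  | nil => exact Or.inl rfl
  | cons k ks ih =>
    right
    have key : ∀ (m : List Letter) {l : List Letter}, G l → G (m ++ l) := by
      intro m
      induction m with
      | nil => intro l h; exact h
      | cons u m ih => intro l h; exact G.cons u (ih h)
    rw [zll_cons]
    rcases ih with h | h
    · rw [h, List.append_nil]; exact G_append _
    · exact key _ h

lemma wl_cons (u : Letter) (l : List Letter) : wl (u :: l) = wl [u] * wl l := by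
  rw [wl_mul]; rfl

lemma z_mul_H1 (k : ℕ) {a : H} (h : a ∈ H1) : z k * a ∈ Hy := by
  rw [z_eq, zl, ← wl_mul, mul_assoc]
  exact mul_Hy _ (y_mul_H1 h)

lemma z_mul_H1_H0 {k : ℕ} (hk : 2 ≤ k) {a : H} (h : a ∈ H1) : z k * a ∈ H0 := by
  obtain ⟨j, rfl⟩ : ∃ j, k = j + 2 := ⟨k - 2, by omega⟩
  have : zl (j + 2) = Letter.x :: zl (j + 1) := by simp [zl, List.replicate_succ]
  rw [z_eq, this, wl_cons, mul_assoc]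
  exact x_mul_Hy (z_mul_H1 _ h)

lemma nharmW_mem (ks ls : List ℕ) : nharmW ks ls ∈ H1 := by
  induction ks, ls using nharmW.induct with
  | case1 w => rw [nharmW]; exact wl_mem_H1 (good_zll w)
  | case2 k w => rw [nharmW]; exact wl_mem_H1 (good_zll _)
  | case3 k w1 l w2 h1 h2 h3 =>
    rw [nharmW]
    exact Hy_le (Submodule.sub_mem _ (Submodule.add_mem _ (z_mul_H1 _ h1) (z_mul_H1 _ h2))
      (z_mul_H1 _ h3))

lemma nharmW_nil (ks : List ℕ) : nharmW ks [] = wl (zll ks) := by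
  cases ks <;> rw [nharmW] <;> rfl

lemma nshW_nil (l : List Letter) : nshW l [] = wl l := by
  cases l <;> rw [nshW] <;> rfl

lemma nshW_cons (u1 u2 : Letter) (w1 w2 : List Letter) : nshW (u1 :: w1) (u2 :: w2) =
      wl [u1] * nshW w1 (u2 :: w2) + wl [u2] * nshW (u1 :: w1) w2 -
        δ w1 • wl (τ u1 :: u2 :: w2) - δ w2 • wl (τ u2 :: u1 :: w1) := by
  rw [nshW]; rfl

lemma nshW_nil_left (l : List Letter) : nshW [] l = wl l := by
  rw [nshW]; rfl

lemma G_ne_nil {l : List Letter} (h : G l) : l ≠ [] := by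
  cases h <;> simp

lemma G_tail {u : Letter} {l : List Letter} (h : G (u :: l)) : (l = [] ∧ u = Letter.y) ∨ G l := by
  cases h with
  | base => exact Or.inl ⟨rfl, rfl⟩
  | cons _ h => exact Or.inr h

lemma δ_G {l : List Letter} (h : G l) : δ l = 0 := by
  cases h <;> rfl

lemma nshW_mem (w1 w2 : List Letter) (h1 : w1 = [] ∨ G w1) (h2 : w2 = [] ∨ G w2)
    (h : G w1 ∨ G w2) : nshW w1 w2 ∈ Hy := by
  induction w1, w2 using nshW.induct with
  | case1 w =>
    rw [nshW_nil_left]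
    rcases h with h | h
    · exact absurd rfl (G_ne_nil h)
    · exact wl_mem_Hy h
  | case2 u w =>
    rw [nshW_nil]
    rcases h with h | h
    · exact wl_mem_Hy h
    · exact absurd rfl (G_ne_nil h)
  | case3 u1 w1 u2 w2 i1 i2 =>
    have g1 : G (u1 :: w1) := by simpa using h1
    have g2 : G (u2 :: w2) := by simpa using h2
    have t1 : w1 = [] ∨ G w1 := (G_tail g1).imp And.left id
    have t2 : w2 = [] ∨ G w2 := (G_tail g2).imp And.left id
    rw [nshW_cons]
    refine Submodule.sub_mem _ (Submodule.sub_mem _ (Submodule.add_mem _ ?_ ?_) ?_) ?_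
    · exact mul_Hy _ (i1 t1 h2 (Or.inr g2))
    · exact mul_Hy _ (i2 h1 t2 (Or.inl g1))
    · exact Submodule.smul_mem _ _ (wl_mem_Hy (G.cons _ g2))
    · exact Submodule.smul_mem _ _ (wl_mem_Hy (G.cons _ g1))

lemma nharm_eq (a b : H) : nharm a b =
    lin (fun w1 => lin (fun w2 => nharmW (tz w1) (tz w2)) b) a := by
  rw [lin_apply, nharm]
  refine Finsupp.sum_congr fun w1 _ => ?_
  rw [lin_apply, Finsupp.smul_sum]
  refine Finsupp.sum_congr fun w2 _ => ?_
  rw [mul_smul]; rfl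

lemma nsh_eq (a b : H) : nsh a b =
    lin (fun w1 => lin (fun w2 => nshW w1 w2) b) a := by
  rw [lin_apply, nsh]
  refine Finsupp.sum_congr fun w1 _ => ?_
  rw [lin_apply, Finsupp.smul_sum]
  refine Finsupp.sum_congr fun w2 _ => ?_
  rw [mul_smul]

noncomputable def mh : H →ₗ[ℚ] H := lin (fun w2 => nharmW [1] (tz w2))
noncomputable def ms : H →ₗ[ℚ] H := lin (fun w2 => nshW [Letter.y] w2)

lemma nharm_Y (a : H) : nharm Y a = mh a := by
  rw [nharm_eq, Y_eq, lin_wl]; rfl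

lemma nsh_Y (a : H) : nsh Y a = ms a := by
  rw [nsh_eq, Y_eq, lin_wl]; rfl

lemma z_one : z 1 = Y := rfl

lemma mh_wl (l : List Letter) : mh (wl l) = nharmW [1] (tz l) := lin_wl _ _
lemma ms_wl (l : List Letter) : ms (wl l) = nshW [Letter.y] l := lin_wl _ _

lemma mh0 : ∀ v ∈ H0, mh v - Y * v ∈ H0 := by
  suffices H0 ≤ H0.comap (mh - LinearMap.mulLeft ℚ Y) from fun v hv => this hv
  refine H0_le ?_ fun l hl => ?_
  · show mh (wl []) - Y * 1 ∈ H0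
    rw [mh_wl, tz_nil, nharmW_nil, mul_one]
    have : wl (zll [1]) - Y = 0 := sub_self _
    rw [this]; exact Submodule.zero_mem _
  · show mh (wl (Letter.x :: l)) - Y * wl (Letter.x :: l) ∈ H0
    obtain ⟨k, ks, h1, h2⟩ := tz_x hl
    rw [mh_wl, h2, nharmW, nharmW, nharmW, ← h2, word_zListW, zll_aux (Or.inr (G.cons _ hl)),
      z_one, word_zListW]
    have e1 := z_mul_H1_H0 (k := k + 2) (by omega) (nharmW_mem [1] ks)
    have e2 := z_mul_H1_H0 (k := 1 + (k + 2)) (by omega) (wl_mem_H1 (good_zll ks))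
    convert Submodule.sub_mem _ e1 e2 using 1
    abel

lemma mh1 : ∀ v ∈ H1, mh (Y * v) - Y * (Y * v) - Y * mh v ∈ H0 := by
  suffices H1 ≤ H0.comap (mh ∘ₗ LinearMap.mulLeft ℚ Y -
      LinearMap.mulLeft ℚ Y ∘ₗ LinearMap.mulLeft ℚ Y - LinearMap.mulLeft ℚ Y ∘ₗ mh) from
    fun v hv => this hv
  refine H1_le fun l hl => ?_
  show mh (Y * wl l) - Y * (Y * wl l) - Y * mh (wl l) ∈ H0
  rw [Y_eq, ← wl_cons, mh_wl, mh_wl, tz_y, nharmW, nharmW, nharmW, word_zListW, word_zListW,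
    ← tz_y, zll_aux, zll_aux hl, z_one, Y_eq]
  · have e2 := z_mul_H1_H0 (k := 1 + 1) (by omega) (wl_mem_H1 hl)
    convert Submodule.neg_mem _ e2 using 1
    abel
  · right
    rcases hl with rfl | hl
    · exact G.base
    · exact G.cons _ hl

lemma ms0 : ∀ v ∈ H0, ms v - Y * v ∈ H0 := by
  suffices H0 ≤ H0.comap (ms - LinearMap.mulLeft ℚ Y) from fun v hv => this hv
  refine H0_le ?_ fun l hl => ?_
  · show ms (wl []) - Y * 1 ∈ H0
    rw [ms_wl, nshW_nil, mul_one, Y_eq, sub_self]; exact Submodule.zero_mem _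
  · show ms (wl (Letter.x :: l)) - Y * wl (Letter.x :: l) ∈ H0
    rw [ms_wl, nshW_cons, nshW_nil_left, δ_G hl, zero_smul, Y_eq]
    have e1 := x_mul_Hy (nshW_mem [Letter.y] l (Or.inr G.base) (Or.inr hl) (Or.inl G.base))
    have e2 := x_mul_Hy (wl_mem_Hy (G.cons Letter.x hl))
    rw [← wl_cons] at e2
    convert Submodule.sub_mem _ e1 e2 using 1
    simp only [δ, τ, one_smul]
    abel

lemma ms1 : ∀ v ∈ H1, ms (Y * v) - Y * (Y * v) - Y * ms v ∈ H0 := by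
  suffices H1 ≤ H0.comap (ms ∘ₗ LinearMap.mulLeft ℚ Y -
      LinearMap.mulLeft ℚ Y ∘ₗ LinearMap.mulLeft ℚ Y - LinearMap.mulLeft ℚ Y ∘ₗ ms) from
    fun v hv => this hv
  refine H1_le fun l hl => ?_
  show ms (Y * wl l) - Y * (Y * wl l) - Y * ms (wl l) ∈ H0
  rw [Y_eq, ← wl_cons, ms_wl, ms_wl, nshW_cons, nshW_nil_left]
  have hg : G (Letter.y :: l) := by
    rcases hl with rfl | hl
    · exact G.base
    · exact G.cons _ hl
  have e1 := x_mul_Hy (wl_mem_Hy hg)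
  have e2 := Submodule.smul_mem _ (δ l) (x_mul_Hy (wl_mem_Hy G.base))
  rw [← wl_cons] at e1 e2
  convert Submodule.neg_mem _ (Submodule.add_mem _ e1 e2) using 1
  simp only [δ, τ, one_smul]
  abel

end RegHom
end

section
open H
open Filter Topology
open scoped Polynomial
namespace RegHom

/-- coefficients: sums over `m = m_1 ≥ m_2 ≥ ... ≥ m_n > 0`. -/
noncomputable def aa : List ℕ → ℕ → ℝ
  | [], m => if m = 0 then 1 else 0
  | k :: ks, m => if m = 0 then 0 else ((m : ℝ) ^ k)⁻¹ * ∑ j ∈ Finset.range (m + 1), aa ks j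

/-- truncated sums -/
noncomputable def bb (ks : List ℕ) (N : ℕ) : ℝ := ∑ j ∈ Finset.range (N + 1), aa ks j

lemma bb_nil (N : ℕ) : bb [] N = 1 := by
  simp [bb, aa]

lemma aa_cons (k : ℕ) (ks : List ℕ) (m : ℕ) :
    aa (k :: ks) m = if m = 0 then 0 else ((m : ℝ) ^ k)⁻¹ * bb ks m := rfl

/-- summation operator -/
noncomputable def TT (k : ℕ) : (ℕ → ℝ) →ₗ[ℚ] (ℕ → ℝ) where
  toFun φ N := ∑ m ∈ Finset.range (N + 1), if m = 0 then 0 else ((m : ℝ) ^ k)⁻¹ * φ m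
  map_add' φ ψ := by
    funext N
    rw [Pi.add_apply, ← Finset.sum_add_distrib]
    refine Finset.sum_congr rfl fun m _ => ?_
    split_ifs
    · simp
    · rw [Pi.add_apply]; ring
  map_smul' c φ := by
    funext N
    rw [Pi.smul_apply, RingHom.id_apply, Finset.smul_sum]
    refine Finset.sum_congr rfl fun m _ => ?_
    split_ifs
    · simp
    · rw [Pi.smul_apply, Rat.smul_def, Rat.smul_def]; ring

lemma TT_zero (k : ℕ) (φ : ℕ → ℝ) : TT k φ 0 = 0 := by
  simp [TT]

lemma TT_succ (k : ℕ) (φ : ℕ → ℝ) (N : ℕ) :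
    TT k φ (N + 1) = TT k φ N + (((N + 1 : ℕ) : ℝ) ^ k)⁻¹ * φ (N + 1) := by
  simp only [TT, LinearMap.coe_mk, AddHom.coe_mk]
  rw [Finset.sum_range_succ, if_neg (Nat.succ_ne_zero N)]

lemma bb_cons (k : ℕ) (ks : List ℕ) : bb (k :: ks) = TT k (bb ks) := rfl

noncomputable def evh : H →ₗ[ℚ] (ℕ → ℝ) := lin (fun l => bb (tz l))

lemma evh_wl (l : List Letter) : evh (wl l) = bb (tz l) := lin_wl _ _

lemma evh_z {k : ℕ} (hk : 1 ≤ k) (h : H) : evh (z k * h) = TT k (evh h) := by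
  have := lin_ext (f := evh ∘ₗ LinearMap.mulLeft ℚ (z k)) (g := TT k ∘ₗ evh) (fun l => by
    show evh (z k * wl l) = TT k (evh (wl l))
    rw [z_eq, wl_mul, evh_wl, evh_wl, tz_zl hk, bb_cons]) h
  exact this

lemma evh_nharmW (ks ls : List ℕ) (hk : ∀ k ∈ ks, 1 ≤ k) (hl : ∀ k ∈ ls, 1 ≤ k) :
    evh (nharmW ks ls) = bb ks * bb ls := by
  induction ks, ls using nharmW.induct with
  | case1 w =>
    rw [nharmW, word_zListW, evh_wl, tz_zll hl]
    funext N; simp [bb_nil]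
  | case2 k w =>
    rw [nharmW, word_zListW, evh_wl, tz_zll hk]
    funext N; simp [bb_nil]
  | case3 k w1 l w2 h1 h2 h3 =>
    have k1 : 1 ≤ k := hk k (by simp)
    have l1 : 1 ≤ l := hl l (by simp)
    have hk' : ∀ j ∈ w1, 1 ≤ j := fun j hj => hk j (by simp [hj])
    have hl' : ∀ j ∈ w2, 1 ≤ j := fun j hj => hl j (by simp [hj])
    rw [nharmW, map_sub, map_add, evh_z k1, evh_z l1, evh_z (by omega), h1 hk' hl, h2 hk hl',
      h3 hk' hl']
    funext N
    simp only [Pi.sub_apply, Pi.add_apply, Pi.mul_apply]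
    induction N with
    | zero => simp [TT_zero, bb_cons]
    | succ N ih =>
      rw [TT_succ, TT_succ, TT_succ]
      rw [bb_cons, bb_cons] at *
      simp only [Pi.mul_apply]
      rw [TT_succ, TT_succ]
      have hp : (((N + 1 : ℕ) : ℝ) ^ (k + l))⁻¹ =
          (((N + 1 : ℕ) : ℝ) ^ k)⁻¹ * (((N + 1 : ℕ) : ℝ) ^ l)⁻¹ := by
        rw [pow_add, mul_inv]
      rw [hp]
      linear_combination ih

lemma evh_nharm (a b : H) : evh (nharm a b) = evh a * evh b := by
  rw [nharm_eq]
  have := lin_ext (f := evh ∘ₗ lin (fun w1 => lin (fun w2 => nharmW (tz w1) (tz w2)) b))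
    (g := LinearMap.mulRight ℚ (evh b) ∘ₗ evh) (fun l => by
      simp only [LinearMap.comp_apply, lin_wl, LinearMap.mulRight_apply]
      have := lin_ext (f := evh ∘ₗ lin (fun w2 => nharmW (tz l) (tz w2)))
        (g := LinearMap.mulLeft ℚ (evh (wl l)) ∘ₗ evh) (fun l' => by
          simp only [LinearMap.comp_apply, lin_wl, LinearMap.mulLeft_apply]
          rw [evh_nharmW _ _ (tz_pos l) (tz_pos l'), evh_wl, evh_wl]) b
      exact this) a
  exact this

/-! bounds -/

lemma aa_nonneg (ks : List ℕ) (m : ℕ) : 0 ≤ aa ks m := by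
  induction ks generalizing m with
  | nil => simp only [aa]; split_ifs <;> simp
  | cons k ks ih =>
    rw [aa_cons]
    split_ifs
    · exact le_rfl
    · exact mul_nonneg (by positivity) (Finset.sum_nonneg fun j _ => ih j)

lemma bb_nonneg (ks : List ℕ) (m : ℕ) : 0 ≤ bb ks m := Finset.sum_nonneg fun j _ => aa_nonneg _ j

lemma bb_one (N : ℕ) : bb [1] N = (harmonic N : ℝ) := by
  rw [bb_cons]
  induction N with
  | zero => simp [TT_zero]
  | succ N ih => rw [TT_succ, ih, bb_nil, harmonic_succ]; push_cast; ring

lemma bb_mono (ks : List ℕ) : Monotone (bb ks) := by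
  intro m n h
  refine Finset.sum_le_sum_of_subset_of_nonneg ?_ fun j _ _ => aa_nonneg _ j
  intro j; simp only [Finset.mem_range]; omega

lemma bb_le (ks : List ℕ) (h : ∀ k ∈ ks, 1 ≤ k) (N : ℕ) : bb ks N ≤ bb [1] N ^ ks.length := by
  induction ks generalizing N with
  | nil => simp [bb_nil]
  | cons k ks ih =>
    have hk : 1 ≤ k := h k (by simp)
    have ih' := ih (fun j hj => h j (by simp [hj]))
    rw [List.length_cons, pow_succ']
    conv_rhs => rw [bb]
    rw [bb, Finset.sum_mul]
    refine Finset.sum_le_sum fun j hj => ?_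
    rw [aa_cons, aa_cons, bb_nil]
    split_ifs with hj0
    · simp
    · have hj1 : (1 : ℝ) ≤ j := by exact_mod_cast Nat.one_le_iff_ne_zero.2 hj0
      rw [mul_one]
      refine mul_le_mul ?_ ?_ (bb_nonneg _ _) (by positivity)
      · gcongr
      · exact (ih' j).trans (pow_le_pow_left₀ (bb_nonneg _ _)
          (bb_mono _ (by simpa [Nat.lt_succ_iff] using hj)) _)

lemma bb_bound (ks : List ℕ) (h : ∀ k ∈ ks, 1 ≤ k) :
    ∃ C : ℝ, 0 ≤ C ∧ ∀ m : ℕ, m ≠ 0 → bb ks m ≤ C * (m : ℝ) ^ (1 / 2 : ℝ) := by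
  set n := ks.length with hn
  refine ⟨2 ^ n * n.factorial * Real.exp (1 / 2), by positivity, fun m hm => ?_⟩
  have hm0 : (0 : ℝ) < m := by positivity
  have hm1 : (1 : ℝ) ≤ m := by exact_mod_cast Nat.one_le_iff_ne_zero.2 hm
  set x : ℝ := 1 + Real.log m with hx
  have hx0 : 0 ≤ x := by have := Real.log_nonneg hm1; positivity
  have h1 : bb ks m ≤ x ^ n := by
    refine (bb_le ks h m).trans ?_
    refine pow_le_pow_left₀ (bb_nonneg _ _) ?_ _
    rw [bb_one]; exact harmonic_le_one_add_log m
  have h2 := Real.pow_div_factorial_le_exp (x / 2) (by positivity) n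
  have h3 : Real.exp (x / 2) = Real.exp (1 / 2) * (m : ℝ) ^ (1 / 2 : ℝ) := by
    rw [Real.rpow_def_of_pos hm0, ← Real.exp_add]; congr 1; rw [hx]; ring
  rw [div_le_iff₀ (by positivity), div_pow, div_le_iff₀ (by positivity), h3] at h2
  refine h1.trans (h2.trans (le_of_eq ?_))
  ring

lemma aa_bound (k : ℕ) (ks : List ℕ) (h : ∀ k ∈ ks, 1 ≤ k) :
    ∃ C : ℝ, 0 ≤ C ∧ ∀ m : ℕ, aa (k :: ks) m ≤ C * (m : ℝ) ^ (1 / 2 - k : ℝ) := by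
  obtain ⟨C, hC, hb⟩ := bb_bound ks h
  refine ⟨C, hC, fun m => ?_⟩
  rw [aa_cons]
  split_ifs with hm
  · positivity
  · have hm0 : (0 : ℝ) < m := by positivity
    rw [Real.rpow_sub hm0, Real.rpow_natCast, inv_mul_eq_div, mul_div_assoc']
    have := hb m hm
    gcongr

end RegHom
end

section
open H
open Filter Topology
namespace RegHom
open PowerSeries

/-- Euler operator -/
noncomputable def DD (f : ℝ⟦X⟧) : ℝ⟦X⟧ := PowerSeries.mk fun m => (m : ℝ) * coeff m f

lemma DD_eq (f : ℝ⟦X⟧) : DD f = PowerSeries.X * PowerSeries.derivative ℝ f := by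
  ext m
  rw [DD, coeff_mk]
  cases m with
  | zero => simp
  | succ m => rw [coeff_succ_X_mul, coeff_derivative]; push_cast; ring

lemma DD_mul (f g : ℝ⟦X⟧) : DD (f * g) = DD f * g + f * DD g := by
  rw [DD_eq, DD_eq, DD_eq, Derivation.leibniz]
  simp only [smul_eq_mul]; ring

lemma DD_add (f g : ℝ⟦X⟧) : DD (f + g) = DD f + DD g := by
  rw [DD_eq, DD_eq, DD_eq, map_add]; ring

lemma DD_sub (f g : ℝ⟦X⟧) : DD (f - g) = DD f - DD g := by
  rw [DD_eq, DD_eq, DD_eq, map_sub]; ring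

lemma DD_smul (c : ℚ) (f : ℝ⟦X⟧) : DD (c • f) = c • DD f := by
  ext m; simp only [DD, coeff_mk, Rat.smul_def, map_rat_smul]; ring

lemma DD_inj {f g : ℝ⟦X⟧} (h : DD f = DD g) (h0 : coeff 0 f = coeff 0 g) : f = g := by
  ext m
  cases m with
  | zero => exact h0
  | succ m =>
    have := congrArg (coeff (m + 1)) h
    simp only [DD, coeff_mk] at this
    exact mul_left_cancel₀ (by positivity) this

noncomputable def geo : ℝ⟦X⟧ := PowerSeries.mk fun _ => 1

lemma coeff_geo_mul (f : ℝ⟦X⟧) (m : ℕ) :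
    coeff m (geo * f) = ∑ j ∈ Finset.range (m + 1), coeff j f := by
  rw [mul_comm, coeff_mul, Finset.Nat.sum_antidiagonal_eq_sum_range_succ_mk]
  simp [geo]

noncomputable def AA : H →ₗ[ℚ] ℝ⟦X⟧ := lin (fun l => PowerSeries.mk (aa (tz l)))

lemma AA_wl (l : List Letter) : AA (wl l) = PowerSeries.mk (aa (tz l)) := lin_wl _ _

lemma AA_nil : AA (wl []) = 1 := by
  rw [AA_wl]; ext m; simp [tz_nil, aa, coeff_one]

noncomputable def om : Letter → ℝ⟦X⟧
  | Letter.x => 1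
  | Letter.y => geo

lemma DA_wl {u : Letter} {w : List Letter} (h : G (u :: w)) :
    DD (AA (wl (u :: w))) = om u * AA (wl w) - (δ w) • (1 : ℝ⟦X⟧) := by
  rcases G_tail h with ⟨rfl, rfl⟩ | hw
  · rw [AA_nil, AA_wl]
    ext m
    simp only [DD, coeff_mk, om, geo, δ, mul_one, one_smul, map_sub, coeff_one, tz_y, tz_nil, aa_cons,
      bb_nil, pow_one]
    by_cases hm : m = 0
    · simp [hm]
    · have : (m : ℝ) ≠ 0 := by exact_mod_cast hm
      simp [hm, this]
  · rw [δ_G hw, zero_smul, sub_zero]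
    obtain ⟨k, ks, e1, e2⟩ := tz_x hw
    cases u with
    | x =>
      rw [AA_wl, AA_wl, e1, e2]
      ext m
      simp only [DD, coeff_mk, om, one_mul, aa_cons]
      by_cases hm : m = 0
      · simp [hm]
      · have : (m : ℝ) ≠ 0 := by exact_mod_cast hm
        simp only [hm, if_false]
        field_simp
        ring
    | y =>
      rw [AA_wl, AA_wl, tz_y]
      ext m
      simp only [om, coeff_geo_mul, DD, coeff_mk, aa_cons]
      by_cases hm : m = 0
      · simp [hm, e1, aa_cons]
      · have : (m : ℝ) ≠ 0 := by exact_mod_cast hm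
        simp only [hm, if_false, bb]
        field_simp

lemma A0_wl {w : List Letter} (h : G w) : coeff 0 (AA (wl w)) = 0 := by
  obtain ⟨k, ks, e1, e2⟩ := tz_x h
  rw [AA_wl, e1, coeff_mk, aa_cons, if_pos rfl]

lemma A0_Hy {a : H} (h : a ∈ Hy) : coeff 0 (AA a) = 0 := by
  induction h using Submodule.span_induction with
  | mem x hx => obtain ⟨l, hl, rfl⟩ := hx; exact A0_wl hl
  | zero => simp
  | add x y _ _ hx hy => rw [map_add, map_add, hx, hy, add_zero]
  | smul c x _ hx => rw [map_smul, map_rat_smul, hx, smul_zero]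

lemma DA_Hy (u : Letter) {a : H} (h : a ∈ Hy) : DD (AA (wl [u] * a)) = om u * AA a := by
  induction h using Submodule.span_induction with
  | mem x hx =>
    obtain ⟨l, hl, rfl⟩ := hx
    rw [← wl_cons, DA_wl (G.cons u hl), δ_G hl, zero_smul, sub_zero]
  | zero => simp [DD_eq]
  | add x y _ _ hx hy => rw [mul_add, map_add, DD_add, hx, hy, map_add, mul_add]
  | smul c x _ hx => rw [mul_smul_comm, map_smul, DD_smul, hx, map_smul, mul_smul_comm]

lemma tail_δ {u : Letter} {w : List Letter} (h : G (u :: w)) (v : H) :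
    δ w • (wl [τ u] * v) = δ w • (wl [Letter.x] * v) := by
  rcases G_tail h with ⟨rfl, rfl⟩ | hw
  · rfl
  · rw [δ_G hw, zero_smul, zero_smul]

lemma AA_nshW (w1 w2 : List Letter) (h1 : w1 = [] ∨ G w1) (h2 : w2 = [] ∨ G w2) :
    AA (nshW w1 w2) = AA (wl w1) * AA (wl w2) := by
  induction w1, w2 using nshW.induct with
  | case1 w => rw [nshW_nil_left, AA_nil, one_mul]
  | case2 u w => rw [nshW_nil, AA_nil, mul_one]
  | case3 u1 w1 u2 w2 i1 i2 =>
    have g1 : G (u1 :: w1) := by simpa using h1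
    have g2 : G (u2 :: w2) := by simpa using h2
    have t1 : w1 = [] ∨ G w1 := (G_tail g1).imp And.left id
    have t2 : w2 = [] ∨ G w2 := (G_tail g2).imp And.left id
    refine DD_inj ?_ ?_
    · rw [nshW_cons, wl_cons (τ u1), wl_cons (τ u2), tail_δ g1, tail_δ g2]
      simp only [map_sub, map_add, map_smul, DD_sub, DD_add, DD_smul]
      rw [DA_Hy _ (nshW_mem _ _ t1 h2 (Or.inr g2)), DA_Hy _ (nshW_mem _ _ h1 t2 (Or.inl g1)),
        DA_Hy _ (wl_mem_Hy g2), DA_Hy _ (wl_mem_Hy g1), i1 t1 h2, i2 h1 t2, DD_mul, DA_wl g1,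
        DA_wl g2]
      simp only [om, one_mul, sub_mul, mul_sub, smul_mul_assoc, mul_smul_comm, mul_one]
      ring
    · rw [A0_Hy (nshW_mem _ _ h1 h2 (Or.inl g1)), coeff_mul, Finset.Nat.antidiagonal_zero, Finset.sum_singleton,
        A0_wl g1, zero_mul]

end RegHom
end

section
open H
open Filter Topology
open scoped ENNReal
namespace RegHom

/-- bounded weakly decreasing positive tuples -/
def Dec (n : ℕ) (f : Fin n → ℕ) : Prop :=
  (∀ i, 0 < f i) ∧ ∀ i j : Fin n, i ≤ j → f j ≤ f i

open Classical in
noncomputable def gE (ks : List ℕ) (N : ℕ) : ℝ≥0∞ :=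
  ∑' f : Fin ks.length → ℕ, if Dec _ f ∧ ∀ i, f i ≤ N then
    ∏ i, ENNReal.ofReal (((f i : ℝ) ^ ks.get i)⁻¹) else 0

lemma Dec_cons {n : ℕ} (m : ℕ) (f : Fin n → ℕ) :
    Dec (n + 1) (Fin.cons m f) ↔ 0 < m ∧ (Dec n f ∧ ∀ i, f i ≤ m) := by
  constructor
  · rintro ⟨h1, h2⟩
    refine ⟨by simpa using h1 0, ⟨fun i => by simpa using h1 i.succ, fun i j hij => ?_⟩, fun i => ?_⟩
    · simpa using h2 i.succ j.succ (by simpa using hij)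
    · simpa using h2 0 i.succ (Fin.zero_le _)
  · rintro ⟨h0, ⟨h1, h2⟩, h3⟩
    refine ⟨fun i => ?_, fun i j hij => ?_⟩
    · refine Fin.cases ?_ (fun i => ?_) i
      · simpa using h0
      · simpa using h1 i
    · induction i using Fin.cases with
      | zero =>
        induction j using Fin.cases with
        | zero => simp
        | succ j => simpa using h3 j
      | succ i =>
        induction j using Fin.cases with
        | zero => simp at hij
        | succ j => simpa using h2 i j (by simpa using hij)

lemma tsum_cons {n : ℕ} (F : (Fin (n + 1) → ℕ) → ℝ≥0∞) :
    ∑' f, F f = ∑' m : ℕ, ∑' f : Fin n → ℕ, F (Fin.cons m f) := by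
  rw [← ENNReal.tsum_prod, ← (Fin.consEquiv (fun _ : Fin (n + 1) => ℕ)).tsum_eq]
  rfl

open Classical in
lemma cons_sum (k : ℕ) (ks : List ℕ) (p : ℕ → Prop) [DecidablePred p] :
    (∑' f : Fin (k :: ks).length → ℕ, if Dec _ f ∧ p (f 0) then
      ∏ i, ENNReal.ofReal (((f i : ℝ) ^ (k :: ks).get i)⁻¹) else 0) =
    ∑' m : ℕ, if 0 < m ∧ p m then ENNReal.ofReal (((m : ℝ) ^ k)⁻¹) * gE ks m else 0 := by
  refine (tsum_cons (n := ks.length) _).trans (tsum_congr fun m => ?_)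
  by_cases hm : 0 < m ∧ p m
  · rw [if_pos hm, gE, ← ENNReal.tsum_mul_left]
    refine tsum_congr fun f => ?_
    by_cases hf : Dec _ f ∧ ∀ i, f i ≤ m
    · rw [if_pos hf, if_pos]
      · refine (Fin.prod_univ_succ (n := ks.length) _).trans ?_
        simp
      · exact ⟨(Dec_cons m f).2 ⟨hm.1, hf⟩, by simpa using hm.2⟩
    · rw [if_neg hf, if_neg, mul_zero]
      exact fun h => hf ((Dec_cons m f).1 h.1).2
  · rw [if_neg hm, ENNReal.tsum_eq_zero]
    intro f
    rw [if_neg]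
    exact fun h => hm ⟨((Dec_cons m f).1 h.1).1, by simpa using h.2⟩

lemma gE_eq (ks : List ℕ) (N : ℕ) : gE ks N = ENNReal.ofReal (bb ks N) := by
  classical
  induction ks generalizing N with
  | nil =>
    rw [gE, bb_nil, tsum_eq_single (fun i => i.elim0)]
    · rw [if_pos]
      · simp
      · exact ⟨⟨fun i => i.elim0, fun i => i.elim0⟩, fun i => i.elim0⟩
    · intro f hf
      exact absurd (funext fun i => i.elim0) hf
  | cons k ks ih =>
    have h1 : gE (k :: ks) N = ∑' f : Fin (k :: ks).length → ℕ, if Dec _ f ∧ f 0 ≤ N then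
      ∏ i, ENNReal.ofReal (((f i : ℝ) ^ (k :: ks).get i)⁻¹) else 0 := by
      rw [gE]
      refine tsum_congr fun f => ?_
      have : (Dec _ f ∧ ∀ i, f i ≤ N) ↔ (Dec _ f ∧ f 0 ≤ N) :=
        ⟨fun h => ⟨h.1, h.2 _⟩, fun h => ⟨h.1, fun i => (h.1.2 _ i (Fin.zero_le i)).trans h.2⟩⟩
      simp only [this]
    rw [h1, cons_sum k ks (fun m => m ≤ N), tsum_eq_sum (s := Finset.range (N + 1)), bb,
      ENNReal.ofReal_sum_of_nonneg fun i _ => aa_nonneg _ _]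
    · refine Finset.sum_congr rfl fun m hm => ?_
      have hm' : m ≤ N := by simpa [Nat.lt_succ_iff] using hm
      rw [aa_cons, ih]
      by_cases h0 : m = 0
      · simp [h0]
      · rw [if_pos ⟨Nat.pos_of_ne_zero h0, hm'⟩, if_neg h0, ENNReal.ofReal_mul (by positivity)]
    · intro m hm
      rw [if_neg]
      rintro ⟨-, h⟩
      exact hm (by simpa [Nat.lt_succ_iff] using h)

lemma nmzeta_nil : nmzeta [] = 1 := by
  rw [nmzeta, tsum_eq_single ⟨fun i => i.elim0, fun i => i.elim0, fun i => i.elim0⟩]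
  · simp
  · intro f hf
    exact absurd (Subtype.ext (funext fun i => i.elim0)) hf

lemma nmzeta_cons (k : ℕ) (ks : List ℕ) : nmzeta (k :: ks) = ∑' m, aa (k :: ks) m := by
  classical
  have e1 : nmzeta (k :: ks) = (∑' f : {f : Fin (k :: ks).length → ℕ // Dec _ f},
      ∏ i, ENNReal.ofReal (((f.1 i : ℝ) ^ (k :: ks).get i)⁻¹)).toReal := by
    rw [ENNReal.tsum_toReal_eq]
    · rw [nmzeta]
      refine tsum_congr fun f => ?_
      rw [ENNReal.toReal_prod]
      refine Finset.prod_congr rfl fun i _ => ?_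
      rw [ENNReal.toReal_ofReal (by positivity)]
    · intro f
      exact ENNReal.prod_ne_top fun i _ => ENNReal.ofReal_ne_top
  have e2 : (∑' f : {f : Fin (k :: ks).length → ℕ // Dec _ f},
      ∏ i, ENNReal.ofReal (((f.1 i : ℝ) ^ (k :: ks).get i)⁻¹)) =
      ∑' m, ENNReal.ofReal (aa (k :: ks) m) := by
    have := tsum_subtype {f : Fin (k :: ks).length → ℕ | Dec _ f}
      (fun f => ∏ i, ENNReal.ofReal (((f i : ℝ) ^ (k :: ks).get i)⁻¹))
    refine Eq.trans this ?_
    have h2 := cons_sum k ks (fun _ => True)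
    simp only [and_true] at h2
    refine Eq.trans (tsum_congr fun f => ?_) (h2.trans (tsum_congr fun m => ?_))
    · rw [Set.indicator_apply]; rfl
    · rw [aa_cons, gE_eq]
      by_cases h0 : m = 0
      · simp [h0]
      · rw [if_pos (Nat.pos_of_ne_zero h0), if_neg h0, ENNReal.ofReal_mul (by positivity)]
  rw [e1, e2, ENNReal.tsum_toReal_eq fun _ => ENNReal.ofReal_ne_top]
  exact tsum_congr fun m => ENNReal.toReal_ofReal (aa_nonneg _ _)

lemma Zbar_eq (a : H) : Zbar a = lin (fun l => nmzeta (tz l)) a := by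
  rw [lin_apply, Zbar]
  refine Finsupp.sum_congr fun w _ => ?_
  rw [Rat.smul_def]; rfl

end RegHom
end

section
open H
open Filter Topology
namespace RegHom

lemma weight (s : ℕ → ℝ) (C : ℝ) (hC : 0 ≤ C) (hs : ∀ m : ℕ, |s m| ≤ C * (m : ℝ) ^ (-(3 / 2) : ℝ)) :
    ∃ C' : ℝ, ∀ (θ : ℕ → ℝ) (ε : ℝ), 0 ≤ ε → (∀ m : ℕ, |1 - θ m| ≤ ((m : ℝ) * ε) ^ (1 / 4 : ℝ)) →
      |∑' m, s m * θ m - ∑' m, s m| ≤ C' * ε ^ (1 / 4 : ℝ) := by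
  have hsum : Summable fun m : ℕ => (m : ℝ) ^ (-(5 / 4) : ℝ) :=
    Real.summable_nat_rpow.2 (by norm_num)
  have hsum2 : Summable fun m : ℕ => (m : ℝ) ^ (-(3 / 2) : ℝ) :=
    Real.summable_nat_rpow.2 (by norm_num)
  have hss : Summable s := Summable.of_norm_bounded (hsum2.mul_left C) hs
  refine ⟨C * ∑' m : ℕ, (m : ℝ) ^ (-(5 / 4) : ℝ), fun θ ε hε hθ => ?_⟩
  have hb : ∀ m, ‖s m * (1 - θ m)‖ ≤ C * ε ^ (1 / 4 : ℝ) * (m : ℝ) ^ (-(5 / 4) : ℝ) := by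
    intro m
    rw [norm_mul, Real.norm_eq_abs, Real.norm_eq_abs]
    refine (mul_le_mul (hs m) (hθ m) (abs_nonneg _) (by positivity)).trans (le_of_eq ?_)
    rw [Real.mul_rpow (by positivity) hε]
    rcases Nat.eq_zero_or_pos m with rfl | hm
    · simp only [Nat.cast_zero]
      rw [Real.zero_rpow (by norm_num), Real.zero_rpow (by norm_num), Real.zero_rpow (by norm_num)]
      ring
    · have hm0 : (0 : ℝ) < m := by exact_mod_cast hm
      have : (m : ℝ) ^ (-(5 / 4) : ℝ) = (m : ℝ) ^ (-(3 / 2) : ℝ) * (m : ℝ) ^ (1 / 4 : ℝ) := by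
        rw [← Real.rpow_add hm0]; norm_num
      rw [this]; ring
  have hsb := hsum.mul_left (C * ε ^ (1 / 4 : ℝ))
  have hs1 : Summable fun m => s m * (1 - θ m) := Summable.of_norm_bounded hsb hb
  have hsθ : ∑' m, s m * θ m = ∑' m, s m - ∑' m, s m * (1 - θ m) := by
    rw [← hss.tsum_sub hs1]
    exact tsum_congr fun m => by ring
  rw [hsθ, sub_sub_cancel_left, abs_neg, ← Real.norm_eq_abs]
  refine (tsum_of_norm_bounded hsb.hasSum hb).trans (le_of_eq ?_)
  rw [tsum_mul_left]; ring

lemma hev_of (ev : H →ₗ[ℚ] (ℕ → ℝ)) (L ε : ℕ → ℝ) (θ : ℕ → ℕ → ℝ)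
    (hε : ∀ n, 0 ≤ ε n) (hθ : ∀ n m : ℕ, |1 - θ n m| ≤ ((m : ℝ) * ε n) ^ (1 / 4 : ℝ))
    (h1 : ev 1 = 1)
    (hw : ∀ l, G l → ∀ n, ev (wl (Letter.x :: l)) n = ∑' m, aa (tz (Letter.x :: l)) m * θ n m)
    (hlim : ∀ J : ℕ, Tendsto (fun n => ε n ^ (1 / 4 : ℝ) * L n ^ J) atTop (𝓝 0)) :
    ∀ a ∈ H0, R L (ev a) (Polynomial.C (Zbar a)) := by
  let V : Submodule ℚ H :=
    { carrier := {a | R L (ev a) (Polynomial.C (Zbar a))}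
      add_mem' := by
        intro a b ha hb
        show R L (ev (a + b)) (Polynomial.C (Zbar (a + b)))
        have := R_add ha hb
        rwa [← map_add, ← Polynomial.C_add, Zbar_eq, Zbar_eq, ← map_add, ← Zbar_eq] at this
      zero_mem' := by
        show R L (ev 0) (Polynomial.C (Zbar 0))
        rw [Zbar_eq, map_zero, map_zero, Polynomial.C_0]
        exact R_zero L
      smul_mem' := by
        intro c a ha
        show R L (ev (c • a)) (Polynomial.C (Zbar (c • a)))
        have := R_smul c ha
        rwa [← map_smul, Polynomial.smul_C, Zbar_eq, ← map_smul, ← Zbar_eq] at this }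
  suffices H0 ≤ V from fun a ha => this ha
  refine H0_le ?_ fun l hl => ?_
  · show R L (ev 1) (Polynomial.C (Zbar 1))
    rw [h1, Zbar_eq, ← wl_nil, lin_wl, tz_nil, nmzeta_nil]
    intro J; simp
  · show R L (ev (wl (Letter.x :: l))) (Polynomial.C (Zbar (wl (Letter.x :: l))))
    obtain ⟨k, ks, e1, e2⟩ := tz_x hl
    have hpos := tz_pos (Letter.x :: l)
    rw [e2] at hpos
    obtain ⟨C, hC, hb⟩ := aa_bound (k + 2) ks (fun j hj => hpos j (by simp [hj]))
    obtain ⟨C', hC'⟩ := weight (aa ((k + 2) :: ks)) C hC (fun m => by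
      rw [abs_of_nonneg (aa_nonneg _ _)]
      refine (hb m).trans ?_
      rcases Nat.eq_zero_or_pos m with rfl | hm
      · simp only [Nat.cast_zero]
        have hk0 : (0 : ℝ) ≤ k := by positivity
        have hne : (1 / 2 - ((k + 2 : ℕ) : ℝ)) ≠ 0 := by
          push_cast
          intro h
          linarith
        rw [Real.zero_rpow hne, Real.zero_rpow (by norm_num)]
      · have hm0 : (1 : ℝ) ≤ m := by exact_mod_cast hm
        refine mul_le_mul_of_nonneg_left (Real.rpow_le_rpow_of_exponent_le hm0 ?_) hC
        have : (0 : ℝ) ≤ k := by positivity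
        push_cast
        linarith)
    intro J
    have h2 := ((hlim J).abs).const_mul C'
    rw [abs_zero, mul_zero] at h2
    refine squeeze_zero_norm (fun n => ?_) h2
    rw [Polynomial.eval_C, norm_mul, hw l hl n, Zbar_eq, lin_wl, e2, nmzeta_cons, abs_mul,
      Real.norm_eq_abs, Real.norm_eq_abs, abs_of_nonneg (Real.rpow_nonneg (hε n) _), ← mul_assoc]
    exact mul_le_mul_of_nonneg_right (hC' (θ n) (ε n) (hε n) (hθ n)) (abs_nonneg _)

lemma exp_lim (J : ℕ) : Tendsto (fun x : ℝ => Real.exp (-x) ^ (1 / 4 : ℝ) * x ^ J) atTop (𝓝 0) := by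
  have h := (Real.tendsto_pow_mul_exp_neg_atTop_nhds_zero J).comp
    (tendsto_id.atTop_div_const (show (0 : ℝ) < 4 by norm_num))
  have h2 := h.const_mul ((4 : ℝ) ^ J)
  rw [mul_zero] at h2
  refine h2.congr fun x => ?_
  simp only [Function.comp_apply, id]
  rw [← Real.exp_mul, div_pow]
  field_simp

/-! harmonic side -/

lemma harm_part : ∃ f : H →ₗ[ℚ] Polynomial ℝ, IsRegHom nharm Zbar f ∧
      ∀ g : H →ₗ[ℚ] Polynomial ℝ, IsRegHom nharm Zbar g → ∀ a ∈ H1, g a = f a := by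
  have hlog : Tendsto (fun n : ℕ => Real.log ((n + 1 : ℕ) : ℝ)) atTop atTop :=
    Real.tendsto_log_atTop.comp (tendsto_natCast_atTop_atTop.comp (tendsto_add_atTop_nat 1))
  refine abstract_main nharm evh (bb [1]) ?_ (fun a _ b _ => evh_nharm a b) ?_ ?_ mh nharm_Y mh0 mh1
  · refine tendsto_atTop_mono (fun n => ?_) hlog
    rw [bb_one]; exact log_add_one_le_harmonic n
  · rw [Y_eq, evh_wl]; rfl
  · refine hev_of evh (bb [1]) (fun n => ((n + 1 : ℕ) : ℝ)⁻¹)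
      (fun n m => if m < n + 1 then 1 else 0) (fun n => by positivity) ?_ ?_ ?_ ?_
    · intro n m
      split_ifs with h
      · simp only [sub_self, abs_zero]; positivity
      · rw [sub_zero, abs_one]
        refine Real.one_le_rpow ?_ (by norm_num)
        rw [← div_eq_mul_inv, one_le_div (by positivity)]
        exact_mod_cast not_lt.1 h
    · rw [← wl_nil, evh_wl, tz_nil]; funext n; rw [bb_nil]; rfl
    · intro l _ n
      rw [evh_wl, tsum_eq_sum (s := Finset.range (n + 1)), bb]
      · refine Finset.sum_congr rfl fun m hm => ?_
        rw [if_pos (Finset.mem_range.1 hm), mul_one]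
      · intro m hm
        rw [if_neg (fun h => hm (Finset.mem_range.2 h)), mul_zero]
    · intro J
      have h1 : Tendsto (fun n : ℕ => 1 + Real.log ((n + 1 : ℕ) : ℝ)) atTop atTop :=
        tendsto_atTop_add_const_left _ _ hlog
      have h2 := ((exp_lim J).comp h1).const_mul (Real.exp (1 / 4))
      rw [mul_zero] at h2
      refine squeeze_zero (fun n => ?_) (fun n => ?_) h2
      · have := bb_nonneg [1] n
        positivity
      · simp only [Function.comp_apply]
        have hn : (0 : ℝ) < ((n + 1 : ℕ) : ℝ) := by positivity
        have e : (((n + 1 : ℕ) : ℝ)⁻¹) ^ (1 / 4 : ℝ) = Real.exp (1 / 4) *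
            Real.exp (-(1 + Real.log ((n + 1 : ℕ) : ℝ))) ^ (1 / 4 : ℝ) := by
          rw [← Real.exp_mul, ← Real.exp_add, Real.rpow_def_of_pos (by positivity), Real.log_inv]
          congr 1; ring
        rw [e, mul_assoc]
        refine mul_le_mul_of_nonneg_left (mul_le_mul_of_nonneg_left ?_ (by positivity))
          (by positivity)
        refine pow_le_pow_left₀ (bb_nonneg _ _) ?_ _
        refine (bb_mono [1] (Nat.le_succ n)).trans ?_
        rw [bb_one]
        exact harmonic_le_one_add_log (n + 1)

/-! shuffle side -/

noncomputable def tt (n : ℕ) : ℝ := 1 - Real.exp (-(n : ℝ))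

lemma tt_nonneg (n : ℕ) : 0 ≤ tt n := by
  have : Real.exp (-(n : ℝ)) ≤ 1 := Real.exp_le_one_iff.2 (by simp)
  rw [tt]; linarith

lemma tt_lt (n : ℕ) : tt n < 1 := by
  have := Real.exp_pos (-(n : ℝ))
  rw [tt]; linarith

noncomputable def evs : H →ₗ[ℚ] (ℕ → ℝ) := lin (fun l n => ∑' m, aa (tz l) m * tt n ^ m)

lemma evs_wl (l : List Letter) : evs (wl l) = fun n => ∑' m, aa (tz l) m * tt n ^ m := lin_wl _ _

lemma aa_bdd (ks : List ℕ) (h : ∀ k ∈ ks, 1 ≤ k) : ∃ C : ℝ, ∀ m, aa ks m ≤ C := by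
  cases ks with
  | nil => exact ⟨1, fun m => by simp only [aa]; split_ifs <;> norm_num⟩
  | cons k ks =>
    obtain ⟨C, hC, hb⟩ := aa_bound k ks (fun j hj => h j (by simp [hj]))
    refine ⟨C, fun m => ?_⟩
    rcases Nat.eq_zero_or_pos m with rfl | hm
    · rw [aa_cons, if_pos rfl]; exact hC
    · refine (hb m).trans (mul_le_of_le_one_right hC ?_)
      have hk : (1 : ℝ) ≤ k := by exact_mod_cast h k (by simp)
      exact Real.rpow_le_one_of_one_le_of_nonpos (by exact_mod_cast hm) (by linarith)

lemma aa_summable (l : List Letter) (n : ℕ) : Summable fun m => ‖aa (tz l) m * tt n ^ m‖ := by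
  obtain ⟨C, hC⟩ := aa_bdd (tz l) (tz_pos l)
  refine Summable.of_nonneg_of_le (fun m => norm_nonneg _) (fun m => ?_)
    ((summable_geometric_of_lt_one (tt_nonneg n) (tt_lt n)).mul_left C)
  rw [Real.norm_of_nonneg (mul_nonneg (aa_nonneg _ _) (pow_nonneg (tt_nonneg n) _))]
  exact mul_le_mul_of_nonneg_right (hC m) (pow_nonneg (tt_nonneg n) _)

lemma evs_AA (a : H) (n : ℕ) : Summable (fun m => PowerSeries.coeff m (AA a) * tt n ^ m) ∧
    evs a n = ∑' m, PowerSeries.coeff m (AA a) * tt n ^ m := by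
  have := span_wl a
  induction this using Submodule.span_induction with
  | mem x hx =>
    obtain ⟨l, rfl⟩ := hx
    rw [AA_wl, evs_wl]
    simp only [PowerSeries.coeff_mk]
    exact ⟨(aa_summable l n).of_norm, trivial⟩
  | zero => simp [summable_zero]
  | add x y _ _ hx hy =>
    simp only [map_add, add_mul, Pi.add_apply]
    exact ⟨hx.1.add hy.1, by rw [hx.1.tsum_add hy.1, hx.2, hy.2]⟩
  | smul c x _ hx =>
    simp only [map_smul, Pi.smul_apply, map_rat_smul, smul_mul_assoc]
    exact ⟨hx.1.const_smul c, by rw [hx.1.tsum_const_smul, hx.2]⟩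

lemma evs_nshW (w1 w2 : List Letter) (h1 : w1 = [] ∨ G w1) (h2 : w2 = [] ∨ G w2) :
    evs (nshW w1 w2) = evs (wl w1) * evs (wl w2) := by
  funext n
  rw [Pi.mul_apply, (evs_AA _ n).2, AA_nshW w1 w2 h1 h2, evs_wl, evs_wl,
    tsum_mul_tsum_eq_tsum_sum_antidiagonal_of_summable_norm (aa_summable w1 n) (aa_summable w2 n)]
  refine tsum_congr fun m => ?_
  rw [PowerSeries.coeff_mul, Finset.sum_mul]
  refine Finset.sum_congr rfl fun p hp => ?_
  have hp' : p.1 + p.2 = m := by simpa using hp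
  rw [AA_wl, AA_wl, PowerSeries.coeff_mk, PowerSeries.coeff_mk, ← hp',
    pow_add]
  ring

lemma evs_nsh (a : H) (ha : a ∈ H1) (b : H) (hb : b ∈ H1) : evs (nsh a b) = evs a * evs b := by
  rw [nsh_eq]
  have : H1 ≤ LinearMap.eqLocus (evs ∘ₗ lin (fun w1 => lin (fun w2 => nshW w1 w2) b))
      (LinearMap.mulRight ℚ (evs b) ∘ₗ evs) := by
    refine H1_le fun l hl => ?_
    have h2 : H1 ≤ LinearMap.eqLocus (evs ∘ₗ lin (fun w2 => nshW l w2))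
        (LinearMap.mulLeft ℚ (evs (wl l)) ∘ₗ evs) := by
      refine H1_le fun l' hl' => ?_
      rw [LinearMap.mem_eqLocus]
      simp only [LinearMap.comp_apply, lin_wl, LinearMap.mulLeft_apply]
      exact evs_nshW l l' hl hl'
    rw [LinearMap.mem_eqLocus]
    simp only [LinearMap.comp_apply, lin_wl, LinearMap.mulRight_apply]
    exact h2 hb
  exact this ha

lemma sh_part : ∃ f : H →ₗ[ℚ] Polynomial ℝ, IsRegHom nsh Zbar f ∧
      ∀ g : H →ₗ[ℚ] Polynomial ℝ, IsRegHom nsh Zbar g → ∀ a ∈ H1, g a = f a := by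
  refine abstract_main nsh evs (fun n => (n : ℝ)) tendsto_natCast_atTop_atTop evs_nsh ?_ ?_
    ms nsh_Y ms0 ms1
  · rw [Y_eq, evs_wl]
    funext n
    have h := Real.hasSum_pow_div_log_of_abs_lt_one (x := tt n)
      (by rw [abs_of_nonneg (tt_nonneg n)]; exact tt_lt n)
    have e : -Real.log (1 - tt n) = n := by rw [tt, sub_sub_cancel, Real.log_exp, neg_neg]
    rw [e] at h
    rw [(aa_summable [Letter.y] n).of_norm.tsum_eq_zero_add, tz_y, tz_nil, ← h.tsum_eq, aa_cons,
      if_pos rfl, zero_mul, zero_add]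
    refine tsum_congr fun m => ?_
    rw [aa_cons, if_neg (Nat.succ_ne_zero m), bb_nil, pow_one]
    push_cast
    ring
  · refine hev_of evs (fun n => (n : ℝ)) (fun n => Real.exp (-(n : ℝ))) (fun n m => tt n ^ m)
      (fun n => (Real.exp_pos _).le) ?_ ?_ ?_ ?_
    · intro n m
      have h0 := tt_nonneg n
      have h1 : tt n ^ m ≤ 1 := pow_le_one₀ h0 (tt_lt n).le
      have h2 : 1 - tt n ^ m ≤ m * Real.exp (-(n : ℝ)) := by
        have := one_add_mul_le_pow (a := -Real.exp (-(n : ℝ)))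
          (by have := tt_nonneg n; rw [tt] at this; linarith) m
        rw [tt, sub_eq_add_neg 1 (Real.exp _)]
        linarith
      have h3 : 0 ≤ tt n ^ m := pow_nonneg h0 m
      rw [abs_of_nonneg (by linarith)]
      refine le_trans ?_ (Real.rpow_le_rpow (by linarith) h2 (by norm_num))
      exact Real.self_le_rpow_of_le_one (by linarith) (by linarith) (by norm_num)
    · rw [← wl_nil, evs_wl, tz_nil]
      funext n
      rw [tsum_eq_single 0]
      · simp [aa]
      · intro m hm; simp [aa, hm]
    · intro l _ n
      rw [evs_wl]
    · intro J
      exact (exp_lim J).comp tendsto_natCast_atTop_atTop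

end RegHom
end

/-- There exist ℚ-algebra homomorphisms `Z̄^{*̄} : (H¹, *̄) → ℝ[T]` and
`Z̄^{ш̄} : (H¹, ш̄) → ℝ[T]` extending `Z̄` and sending `y` to `T`, and they are
unique (as maps on `H¹`). -/
theorem reg_homs_exist_unique :
    (∃ f : H →ₗ[ℚ] Polynomial ℝ, IsRegHom nharm Zbar f ∧
      ∀ g : H →ₗ[ℚ] Polynomial ℝ, IsRegHom nharm Zbar g → ∀ a ∈ H1, g a = f a) ∧
    (∃ f : H →ₗ[ℚ] Polynomial ℝ, IsRegHom nsh Zbar f ∧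
      ∀ g : H →ₗ[ℚ] Polynomial ℝ, IsRegHom nsh Zbar g → ∀ a ∈ H1, g a = f a) := by
  exact ⟨RegHom.harm_part, RegHom.sh_part⟩
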